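/- For each l ≥ 0, let π_l be a permutation of {1, 2, …, 2^l}. For l ≥ 0 and 1 ≤ j ≤ 2^l, let κ_j^l denote the reduced continued fraction expansion (a finite list of positive integers) of the j-th rational, counted from the left, at level l of the Kepler tree. Let 𝒦^π be the infinite sequence of positive integers obtained by concatenating, for l = 0, 1, 2, … in order, the lists κ_{π_l(1)}^l, κ_{π_l(2)}^l, …, κ_{π_l(2^l)}^l. Then 𝒦^π is Minkowski normal: for every k ≥ 1 and every block d = (d_1, …, d_k) of positive integers, the asymptotic frequency of occurrences of d among the first n digits of 𝒦^π tends to 2^{−(d_1 + ⋯ + d_k)} as n → ∞. -/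

import Mathlib

/-- Value of a finite regular continued fraction
`[a₁, a₂, …, aₙ] = 1/(a₁ + 1/(a₂ + ⋯ + 1/aₙ))`. -/
def cfvQ : List ℕ → ℚ
  | [] => 0
  | a :: t => 1 / (a + cfvQ t)

/-- Fuelled continued fraction digit algorithm: for `r ∈ (0,1)` produce the digit `⌊1/r⌋`
and recurse on the fractional part of `1/r`. -/
def cfeAux : ℕ → ℚ → List ℕ
  | 0, _ => []
  | fuel + 1, r =>
    if 0 < r ∧ r < 1 then (⌊r⁻¹⌋).toNat :: cfeAux fuel (Int.fract r⁻¹) else []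

/-- The reduced regular continued fraction expansion `[a₁, …, aₙ]` (all `aᵢ ≥ 1`, `aₙ ≥ 2`)
of a rational `r ∈ (0,1)`; the empty list for `r ∉ (0,1)`.  (Each step of the digit
algorithm strictly decreases the denominator, so `r.den` steps of fuel always suffice.) -/
def cfe (r : ℚ) : List ℕ := cfeAux r.den r

/-- The Kepler tree rule: if a node carries the rational `r = p/q` (in lowest terms), then
its left child carries `r/(r+1) = p/(p+q)` and its right child carries `1/(r+1) = q/(p+q)`.
(`false` = left child, `true` = right child.) -/
def keplerStep (r : ℚ) (b : Bool) : ℚ := if b then 1 / (r + 1) else r / (r + 1)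

/-- The rational at the node of the Kepler tree indexed by the binary word `w`:
the root `1/2` is indexed by the empty word, and appending `false` (resp. `true`) moves to
the left (resp. right) child. -/
def keplerNode (w : List Bool) : ℚ := w.foldl keplerStep (1 / 2)

/-- The top-down, left-to-right enumeration of the Kepler tree: `keplerSeq 1 = 1/2` is the
root, and the children of `keplerSeq n` are `keplerSeq (2n)` (left) and `keplerSeq (2n+1)`
(right).  (`keplerSeq i` is the `i`-th term `k_i`; `keplerSeq 0` is junk.) -/
def keplerSeq (n : ℕ) : ℚ :=
  if n ≤ 1 then 1 / 2
  else keplerStep (keplerSeq (n / 2)) (decide (n % 2 = 1))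
  termination_by n
  decreasing_by exact Nat.div_lt_self (by omega) (by norm_num)

/-- `occCount a d n` = number of occurrences of the block `d` among the first `n` digits of
the sequence `a`: the number of (0-indexed) positions `p` with `p + d.length ≤ n` such that
the digits of `a` starting at position `p` spell out `d`.  (Positions `p = i - 1` for
`1 ≤ i ≤ n - d.length + 1`.) -/
noncomputable def occCount (a : ℕ → ℕ) (d : List ℕ) (n : ℕ) : ℕ :=
  Set.ncard {p : ℕ | p + d.length ≤ n ∧ ∀ j < d.length, a (p + j) = d.getD j 0}

/-- A sequence of positive integer digits is *Minkowski normal* if every nonempty block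
`d = (d₁, …, d_k)` of positive integers occurs with asymptotic frequency
`2^{-(d₁ + ⋯ + d_k)}`. -/
def MinkowskiNormalSeq (a : ℕ → ℕ) : Prop :=
  ∀ d : List ℕ, d ≠ [] → (∀ x ∈ d, 0 < x) →
    Filter.Tendsto (fun n => (occCount a d n : ℝ) / n) Filter.atTop
      (nhds (((2 : ℝ) ^ d.sum)⁻¹))

/-- Given permutations `π l` of the `2^l` positions of level `l`, the concatenation (in
left-to-right order of `j`) of the reduced continued fraction expansions
`κ^l_{π_l(j)} = cfe (keplerSeq (2^l + π l j))` of the rationals of level `l` of the Kepler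
tree; `keplerSeq (2^l + j)` is the `(j+1)`-st rational from the left at level `l`. -/
def permLevel (π : (l : ℕ) → Equiv.Perm (Fin (2 ^ l))) (l : ℕ) : List ℕ :=
  (List.ofFn fun j : Fin (2 ^ l) => cfe (keplerSeq (2 ^ l + (π l j : ℕ)))).flatten

/-- The infinite digit sequence `𝒦^π` obtained by concatenating, for `l = 0, 1, 2, …`, the
within-level permuted expansions `κ^l_{π_l(1)}, κ^l_{π_l(2)}, …, κ^l_{π_l(2^l)}`;
`permDigits π n` is its `(n+1)`-st digit.  (The first `n+1` levels contribute more than `n`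
digits, so the `getD` lookup is within range.) -/
def permDigits (π : (l : ℕ) → Equiv.Perm (Fin (2 ^ l))) (n : ℕ) : ℕ :=
  ((List.range (n + 1)).flatMap (permLevel π)).getD n 0

/-!
In heap order, the left child of a node of the Kepler tree increments its first continued fraction
digit and the right child prepends the digit `1`. So, at a random descendant `d.sum` generations
below any node, the expansion starts with the block `d` with probability exactly `c = 2⁻¹ ^ d.sum`:
a leading digit `x` takes one right and `x - 1` left turns to produce.

The discrepancy `f n`, i.e. the number of occurrences of `d` in the expansion at the node `n` minus
`c` times its length, changes by at most `1` from a node to its children. By the previous remark it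
becomes a martingale along a random branch once it is averaged over the descendants `d.sum`
generations below. Orthogonality of the increments makes the mean of `f ^ 2` over level `l` at most
linear in `l`, so the mean of `|f|` is `O(√l)`, which is negligible against the mean length
`1 + l / 2` of the expansions. Since absolute values are summed, neither the order of the expansions
within a level nor the number of them that is taken matters. Each junction of two expansions costs
at most `d.length` further occurrences, and a cut inside an expansion at most its length `≤ l + 1`.
-/

open Finset Filter Asymptotics
open scoped BigOperators

theorem isLittleO_natCast_of_sq_le {x : ℕ → ℝ} {a b : ℝ} (h : ∀ l : ℕ, x l ^ 2 ≤ a + b * l) :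
    x =o[atTop] fun l => (l : ℝ) := by
  have linear : (fun l => x l ^ 2) =O[atTop] fun l => (l : ℝ) := by
    refine IsBigO.of_bound (|a| + b) ?_
    filter_upwards [eventually_ge_atTop 1] with l hl
    rw [Real.norm_of_nonneg (sq_nonneg _), Real.norm_natCast, add_mul]
    have hl' : (1 : ℝ) ≤ l := by exact_mod_cast hl
    linarith [h l, le_abs_self a, le_mul_of_one_le_right (abs_nonneg a) hl']
  have square : (fun l : ℕ => (l : ℝ)) =o[atTop] fun l => (l : ℝ) ^ 2 := by
    simpa [Function.comp_def] using
      (isLittleO_pow_pow_atTop_of_lt (𝕜 := ℝ) one_lt_two).comp_tendsto tendsto_natCast_atTop_atTop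
  exact (linear.trans_isLittleO square).of_pow two_ne_zero

theorem isLittleO_natCast_of_forall_le {N : ℕ → ℕ} (hN : Tendsto N atTop atTop) {x B : ℕ → ℝ}
    (hx : ∀ L n, n ≤ N (L + 1) → |x n| ≤ B L) (hB : B =o[atTop] fun L => (N L : ℝ)) :
    x =o[atTop] fun n => (n : ℝ) := by
  refine isLittleO_iff.2 fun ε hε => ?_
  obtain ⟨L₀, hL₀⟩ := eventually_atTop.1 (hB.def hε)
  filter_upwards [eventually_ge_atTop (N L₀)] with n hn
  obtain ⟨L, hL, hle, hlt⟩ : ∃ L ≥ L₀, N L ≤ n ∧ n < N (L + 1) := by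
    by_contra! h
    have bounded : ∀ L ≥ L₀, N L ≤ n := fun L hL => Nat.le_induction hn h L hL
    obtain ⟨L, hL, hgt⟩ := ((eventually_ge_atTop L₀).and (hN.eventually_gt_atTop n)).exists
    exact (bounded L hL).not_gt hgt
  calc ‖x n‖ ≤ B L := hx L n hlt.le
    _ ≤ ‖B L‖ := le_abs_self _
    _ ≤ ε * ‖(N L : ℝ)‖ := hL₀ L hL
    _ ≤ ε * ‖(n : ℝ)‖ := by simp only [Real.norm_natCast]; gcongr

section TreeMartingale

variable {ι V : Type*} [Fintype ι] (child : ι → V → V)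

/-- The averaging operator of a tree with vertex set `V`, where `child i v` is the `i`-th child of
`v`: it replaces a function by the function of its means over the children of each vertex, so that
its `l`-th power averages over the descendants at distance `l`. -/
noncomputable def childMean : Module.End ℝ (V → ℝ) where
  toFun f v := 𝔼 i, f (child i v)
  map_add' f g := by ext v; exact expect_add_distrib ..
  map_smul' a f := by ext v; exact (mul_expect ..).symm

variable {child}

theorem childMean_apply (f : V → ℝ) (v : V) : childMean child f v = 𝔼 i, f (child i v) := rfl

theorem childMean_mono : Monotone (childMean child) :=
  fun _ _ h v => expect_le_expect fun i _ => h (child i v)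

theorem childMean_pow_mono (k : ℕ) : Monotone (childMean child ^ k : Module.End ℝ (V → ℝ)) := by
  rw [Module.End.coe_pow]
  exact childMean_mono.iterate k

variable [Nonempty ι]

theorem childMean_const (c : ℝ) : childMean child (fun _ => c) = fun _ => c :=
  funext fun _ => Fintype.expect_const c

theorem childMean_pow_const (c : ℝ) (k : ℕ) :
    (childMean child ^ k) (fun _ => c) = fun _ => c := by
  induction k with
  | zero => rfl
  | succ k ih => rw [pow_succ, Module.End.mul_apply, childMean_const, ih]

theorem abs_childMean_pow_le {f : V → ℝ} {C : ℝ} (hf : ∀ v, |f v| ≤ C) (k : ℕ) (v : V) :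
    |(childMean child ^ k) f v| ≤ C := by
  have upper := childMean_pow_mono (child := child) k (fun v => (abs_le.1 (hf v)).2) v
  have lower := childMean_pow_mono (child := child) k (fun v => (abs_le.1 (hf v)).1) v
  rw [childMean_pow_const] at upper lower
  exact abs_le.2 ⟨lower, upper⟩

theorem sq_childMean_pow_le (f : V → ℝ) (k : ℕ) (v : V) :
    (childMean child ^ k) f v ^ 2 ≤ (childMean child ^ k) (f ^ 2) v := by
  induction k generalizing f with
  | zero => exact le_rfl
  | succ k ih =>
    simp only [pow_succ (childMean child), Module.End.mul_apply]
    refine (ih _).trans (childMean_pow_mono k (fun v => ?_) v)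
    simpa [childMean_apply] using expect_mul_sq_le_sq_mul_sq univ (fun i => f (child i v)) 1

theorem abs_childMean_pow_sub_le {f : V → ℝ} {D : ℝ} (hf : ∀ i v, |f (child i v) - f v| ≤ D)
    (k : ℕ) (v : V) : |(childMean child ^ k) f v - f v| ≤ k * D := by
  have drift (v : V) : |(childMean child f - f) v| ≤ D := by
    have : (childMean child f - f) v = 𝔼 i, (f (child i v) - f v) := by
      rw [expect_sub_distrib, Fintype.expect_const]; rfl
    rw [this]
    exact (abs_expect_le ..).trans (expect_le (univ_nonempty (α := ι)) fun i _ => hf i v)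
  induction k with
  | zero => simp
  | succ k ih =>
    have split : (childMean child ^ (k + 1)) f v - f v =
        (childMean child ^ k) (childMean child f - f) v + ((childMean child ^ k) f v - f v) := by
      rw [map_sub, pow_succ, Module.End.mul_apply, Pi.sub_apply]
      ring
    rw [split, Nat.cast_succ]
    linarith [abs_add_le ((childMean child ^ k) (childMean child f - f) v)
      ((childMean child ^ k) f v - f v), abs_childMean_pow_le (child := child) drift k v]

theorem childMean_pow_sq_le {M : V → ℝ} {D : ℝ} (hM : childMean child M = M)
    (hD : ∀ i v, |M (child i v) - M v| ≤ D) (l : ℕ) (v : V) :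
    (childMean child ^ l) (M ^ 2) v ≤ M v ^ 2 + l * D ^ 2 := by
  have increment : childMean child (M ^ 2) ≤ M ^ 2 + fun _ => D ^ 2 := fun v => calc
    childMean child (M ^ 2) v
      = 𝔼 i, ((M (child i v) - M v) ^ 2 + 2 * M v * M (child i v) - M v ^ 2) :=
        expect_congr rfl fun i _ => by simp only [Pi.pow_apply]; ring
    _ = 𝔼 i, (M (child i v) - M v) ^ 2 + 2 * M v * childMean child M v - M v ^ 2 := by
        rw [expect_sub_distrib, expect_add_distrib, ← mul_expect, Fintype.expect_const,
          childMean_apply]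
    _ = 𝔼 i, (M (child i v) - M v) ^ 2 + M v ^ 2 := by rw [hM]; ring
    _ ≤ D ^ 2 + M v ^ 2 := by
        gcongr
        exact expect_le (univ_nonempty (α := ι)) fun i _ =>
          sq_le_sq.2 ((hD i v).trans (le_abs_self D))
    _ = (M ^ 2 + fun _ => D ^ 2 : V → ℝ) v := add_comm _ _
  induction l with
  | zero => simp
  | succ l ih =>
    have := childMean_pow_mono (child := child) l increment v
    rw [map_add, childMean_pow_const, Pi.add_apply] at this
    rw [pow_succ, Module.End.mul_apply, Nat.cast_succ]
    linarith

theorem isLittleO_childMean_pow_abs {f : V → ℝ} {D : ℝ}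
    (hf : ∀ i v, |f (child i v) - f v| ≤ D) {s : ℕ}
    (hmart : childMean child ((childMean child ^ s) f) = (childMean child ^ s) f) (v : V) :
    (fun l : ℕ => (childMean child ^ l) |f| v) =o[atTop] fun l : ℕ => (l : ℝ) := by
  set M := (childMean child ^ s) f
  set C := s * D
  have hC : ∀ v, |M v - f v| ≤ C := abs_childMean_pow_sub_le hf s
  have hstep : ∀ i v, |M (child i v) - M v| ≤ 2 * C + D := fun i v => by
    have h₁ := abs_le.1 (hC (child i v))
    have h₂ := abs_le.1 (hC v)
    have h₃ := abs_le.1 (hf i v)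
    exact abs_le.2 ⟨by linarith, by linarith⟩
  have hsq : |f| ^ 2 ≤ (2 : ℝ) • M ^ 2 + fun _ => 2 * C ^ 2 := fun v => calc
    (|f| ^ 2) v = (M v + (f v - M v)) ^ 2 := by simp
    _ ≤ 2 * (M v ^ 2 + (f v - M v) ^ 2) := add_sq_le
    _ ≤ 2 * (M v ^ 2 + C ^ 2) := by
      have := sq_le_sq.2 ((abs_sub_comm (f v) (M v) ▸ hC v).trans (le_abs_self C))
      gcongr
    _ = ((2 : ℝ) • M ^ 2 + fun _ => 2 * C ^ 2 : V → ℝ) v := mul_add ..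
  refine isLittleO_natCast_of_sq_le (a := 2 * M v ^ 2 + 2 * C ^ 2) (b := 2 * (2 * C + D) ^ 2)
    fun l => ?_
  have average := childMean_pow_mono (child := child) l hsq v
  rw [map_add, map_smul, childMean_pow_const] at average
  simp only [Pi.add_apply, Pi.smul_apply, smul_eq_mul] at average
  linarith [sq_childMean_pow_le (child := child) |f| l v, childMean_pow_sq_le hmart hstep l v]

end TreeMartingale

section Concatenation

variable {α : Type*}

theorem le_length_flatMap_range {u : ℕ → List α} (hu : ∀ l, u l ≠ []) (L : ℕ) :
    L ≤ ((List.range L).flatMap u).length := by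
  induction L with
  | zero => exact Nat.zero_le _
  | succ L ih =>
    have := List.length_pos_of_ne_nil (hu L)
    rw [List.range_succ, List.flatMap_append, List.length_append, List.flatMap_singleton]
    omega

theorem flatMap_range_prefix (u : ℕ → List α) {m n : ℕ} (h : m ≤ n) :
    (List.range m).flatMap u <+: (List.range n).flatMap u := by
  obtain ⟨k, rfl⟩ := Nat.exists_eq_add_of_le h
  rw [List.range_add, List.flatMap_append]
  exact List.prefix_append _ _

theorem map_getD_flatMap_range_prefix {u : ℕ → List α} (hu : ∀ l, u l ≠ []) (x : α) {n L : ℕ}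
    (hn : n ≤ ((List.range L).flatMap u).length) :
    ((List.range n).map fun m => ((List.range (m + 1)).flatMap u).getD m x) <+:
      (List.range L).flatMap u := by
  refine List.prefix_iff_getElem.2 ⟨by simpa using hn, fun m hm => ?_⟩
  rw [List.length_map, List.length_range] at hm
  have hm' : m < ((List.range (m + 1)).flatMap u).length := le_length_flatMap_range hu (m + 1)
  rw [List.getElem_map, List.getElem_range, List.getD_eq_getElem _ _ hm',
    (flatMap_range_prefix u (le_max_left (m + 1) L)).getElem hm',
    (flatMap_range_prefix u (le_max_right (m + 1) L)).getElem (hm.trans_le hn)]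

theorem sum_map_flatMap_range {M : Type*} [AddCommMonoid M] (u : ℕ → List α) (φ : α → M) (L : ℕ) :
    (((List.range L).flatMap u).map φ).sum = ∑ l ∈ range L, ((u l).map φ).sum := by
  induction L with
  | zero => rfl
  | succ L ih =>
    rw [List.range_succ, List.flatMap_append, List.map_append, List.sum_append, ih,
      List.flatMap_singleton, sum_range_succ]

end Concatenation

section Blocks

variable {α : Type*} [DecidableEq α]

/-- The number of occurrences of the block `d` in the finite word `w`. -/
def blockCount (d w : List α) : ℕ := #{p ∈ range w.length | d <+: w.drop p}

theorem blockCount_cons (d : List α) (a : α) (w : List α) :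
    blockCount d (a :: w) = blockCount d w + if d <+: a :: w then 1 else 0 := by
  simp only [blockCount, card_filter, List.length_cons, sum_range_succ', List.drop_succ_cons,
    List.drop_zero]

theorem blockCount_le_length (d w : List α) : blockCount d w ≤ w.length :=
  (card_filter_le _ _).trans_eq (card_range _)

theorem blockCount_add_le_append (d u v : List α) :
    blockCount d u + blockCount d v ≤ blockCount d (u ++ v) := by
  induction u with
  | nil => simp [blockCount]
  | cons a u ih =>
    have extend : d <+: a :: u → d <+: a :: (u ++ v) := fun h => h.trans (List.prefix_append _ v)
    rw [List.cons_append, blockCount_cons, blockCount_cons]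
    split_ifs <;> grind

/-- Only the occurrences starting in the last `d.length` letters of `u` can straddle the
junction. -/
theorem blockCount_append_le (d u v : List α) :
    blockCount d (u ++ v) ≤ blockCount d u + blockCount d v + min u.length d.length := by
  induction u with
  | nil => simp [blockCount]
  | cons a u ih =>
    have restrict (h : d.length ≤ u.length + 1) (H : d <+: a :: (u ++ v)) : d <+: a :: u :=
      List.prefix_of_prefix_length_le H (List.prefix_append (a :: u) v) (by simpa using h)
    rw [List.cons_append, blockCount_cons, blockCount_cons, List.length_cons]
    split_ifs <;> grind

/-- The excess of the number of occurrences of `d` in `w` over the number expected when `d` has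
frequency `c`. -/
noncomputable def discrepancy (d : List α) (c : ℝ) (w : List α) : ℝ :=
  blockCount d w - c * w.length

/-- The indicator function of the set of words starting with the block `d`, used to track how the
discrepancy changes from a node to its children. -/
noncomputable def prefixIndicator (d w : List α) : ℝ := if d <+: w then 1 else 0

theorem prefixIndicator_mem_Icc (d w : List α) : prefixIndicator d w ∈ Set.Icc 0 1 := by
  unfold prefixIndicator; split_ifs <;> norm_num

theorem discrepancy_cons (d : List α) (c : ℝ) (a : α) (w : List α) :
    discrepancy d c (a :: w) = discrepancy d c w + prefixIndicator d (a :: w) - c := by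
  simp only [discrepancy, blockCount_cons, prefixIndicator, List.length_cons]
  push_cast
  ring

theorem abs_discrepancy_append_le (d : List α) (c : ℝ) (u v : List α) :
    |discrepancy d c (u ++ v)| ≤ |discrepancy d c u| + d.length + |discrepancy d c v| := by
  have lower : (blockCount d u + blockCount d v : ℝ) ≤ blockCount d (u ++ v) := by
    exact_mod_cast blockCount_add_le_append d u v
  have upper : (blockCount d (u ++ v) : ℝ) ≤ blockCount d u + blockCount d v + d.length := by
    exact_mod_cast (blockCount_append_le d u v).trans (by gcongr; exact min_le_right _ _)
  have junction : |discrepancy d c (u ++ v) - (discrepancy d c u + discrepancy d c v)| ≤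
      d.length := by
    simp only [discrepancy, List.length_append]
    push_cast
    exact abs_le.2 ⟨by linarith, by linarith⟩
  have := abs_add_le (discrepancy d c u) (discrepancy d c v)
  have := abs_sub_abs_le_abs_sub (discrepancy d c (u ++ v)) (discrepancy d c u + discrepancy d c v)
  linarith

theorem abs_discrepancy_le_length {c : ℝ} (hc : c ∈ Set.Icc 0 1) (d w : List α) :
    |discrepancy d c w| ≤ w.length := by
  have hcount : (blockCount d w : ℝ) ≤ w.length := by exact_mod_cast blockCount_le_length d w
  have hcw : c * w.length ≤ w.length := mul_le_of_le_one_left (by positivity) hc.2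
  have hcw' : 0 ≤ c * w.length := mul_nonneg hc.1 (by positivity)
  rw [discrepancy, abs_le]
  constructor <;> linarith [(blockCount d w).cast_nonneg (α := ℝ)]

theorem abs_discrepancy_le_of_prefix_flatten {c : ℝ} (hc : c ∈ Set.Icc 0 1) (d : List α) {R : ℕ}
    {W : List (List α)} (hR : ∀ u ∈ W, u.length ≤ R) {w : List α} (hw : w <+: W.flatten) :
    |discrepancy d c w| ≤ (W.map fun u => |discrepancy d c u| + d.length).sum + R := by
  induction W generalizing w with
  | nil =>
    obtain rfl : w = [] := by simpa using hw
    simp [discrepancy, blockCount]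
  | cons u W ih =>
    rw [List.flatten_cons] at hw
    rw [List.map_cons, List.sum_cons]
    rcases List.prefix_or_prefix_of_prefix hw (List.prefix_append u _) with hwu | ⟨v, rfl⟩
    · have hlen : (w.length : ℝ) ≤ R := by exact_mod_cast hwu.length_le.trans (hR u (by simp))
      have htail : 0 ≤ (W.map fun u => |discrepancy d c u| + d.length).sum :=
        List.sum_nonneg (List.forall_mem_map.2 fun _ _ => by positivity)
      have hhead : 0 ≤ |discrepancy d c u| + d.length := by positivity
      linarith [abs_discrepancy_le_length hc d w]
    · linarith [ih (fun u hu => hR u (by simp [hu])) ((List.prefix_append_right_inj u).1 hw),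
        abs_discrepancy_append_le d c u v]

end Blocks

theorem prefix_drop_map_range_iff (a : ℕ → ℕ) {d : List ℕ} (hd : d ≠ []) (n p : ℕ) :
    d <+: ((List.range n).map a).drop p ↔
      p + d.length ≤ n ∧ ∀ j < d.length, a (p + j) = d.getD j 0 := by
  have hpos := List.length_pos_of_ne_nil hd
  rw [List.prefix_iff_getElem]
  simp only [List.length_drop, List.length_map, List.length_range, List.getElem_drop,
    List.getElem_map, List.getElem_range]
  constructor
  · rintro ⟨hlen, h⟩
    exact ⟨by omega, fun j hj => by rw [List.getD_eq_getElem _ _ hj, h j hj]⟩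
  · rintro ⟨hlen, h⟩
    exact ⟨by omega, fun j hj => by rw [h j hj, List.getD_eq_getElem _ _ hj]⟩

theorem occCount_eq_blockCount (a : ℕ → ℕ) {d : List ℕ} (hd : d ≠ []) (n : ℕ) :
    occCount a d n = blockCount d ((List.range n).map a) := by
  have hpos := List.length_pos_of_ne_nil hd
  rw [occCount, blockCount, ← Set.ncard_coe_finset]
  congr 1
  ext p
  simp only [prefix_drop_map_range_iff a hd, Set.mem_ofPred_eq, List.length_map, List.length_range,
    coe_filter, mem_range]
  exact ⟨fun h => ⟨by omega, h⟩, And.right⟩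

theorem tendsto_occCount_div_iff (a : ℕ → ℕ) {d : List ℕ} (hd : d ≠ []) (c : ℝ) :
    Tendsto (fun n => (occCount a d n : ℝ) / n) atTop (nhds c) ↔
      (fun n => discrepancy d c ((List.range n).map a)) =o[atTop] fun n => (n : ℝ) := by
  have ne_zero : ∀ᶠ n : ℕ in atTop, (n : ℝ) ≠ 0 := by
    filter_upwards [eventually_gt_atTop 0] with n hn using by positivity
  rw [isLittleO_iff_tendsto' (ne_zero.mono fun n hn h => absurd h hn), ← tendsto_sub_nhds_zero_iff]
  refine tendsto_congr' ?_
  filter_upwards [ne_zero] with n hn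
  rw [discrepancy, occCount_eq_blockCount a hd, List.length_map, List.length_range]
  field_simp

theorem cfeAux_of_nonpos {r : ℚ} (hr : r ≤ 0) (fuel : ℕ) : cfeAux fuel r = [] := by
  cases fuel with
  | zero => rfl
  | succ fuel => rw [cfeAux, if_neg fun h => hr.not_gt h.1]

theorem cfeAux_eq_cfeAux_of_num_le {m n : ℕ} {r : ℚ} (hm : r.num ≤ m) (hn : r.num ≤ n) :
    cfeAux m r = cfeAux n r := by
  rcases le_or_gt r 0 with hr | hr
  · rw [cfeAux_of_nonpos hr, cfeAux_of_nonpos hr]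
  have hnum := Rat.num_pos.2 hr
  induction m generalizing n r with
  | zero => omega
  | succ m ih =>
    obtain ⟨n, rfl⟩ : ∃ k, n = k + 1 := ⟨n - 1, by omega⟩
    have hlt := Rat.fract_inv_num_lt_num_of_pos hr
    rcases (Int.fract_nonneg r⁻¹).eq_or_lt with h | h
    · simp only [cfeAux, cfeAux_of_nonpos h.ge]
    · rw [cfeAux, cfeAux, ih (n := n) (by omega) (by omega) h (Rat.num_pos.2 h)]

theorem cfe_eq_cons {r : ℚ} (h0 : 0 < r) (h1 : r < 1) :
    cfe r = ⌊r⁻¹⌋.toNat :: cfe (Int.fract r⁻¹) := by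
  have hnum : r.num < r.den := Rat.num_lt_denom_iff.2 h1
  have hlt := Rat.fract_inv_num_lt_num_of_pos h0
  obtain ⟨k, hk⟩ : ∃ k, r.den = k + 1 := Nat.exists_eq_succ_of_ne_zero r.den_nz
  rw [cfe, hk, cfeAux, if_pos ⟨h0, h1⟩, cfe, cfeAux_eq_cfeAux_of_num_le (by omega)]
  exact (Rat.num_lt_denom_iff.2 (Int.fract_lt_one r⁻¹)).le

theorem cfe_one_half : cfe (1 / 2) = [2] := by
  have floor_two : ⌊(2 : ℚ)⌋ = 2 := Int.floor_natCast 2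
  have fract_two : Int.fract (2 : ℚ) = 0 := Int.fract_natCast 2
  rw [cfe_eq_cons (by norm_num) (by norm_num), one_div, inv_inv, floor_two, fract_two]
  rfl

theorem cfe_one_div_add_one {r : ℚ} (h0 : 0 < r) (h1 : r < 1) :
    cfe (1 / (r + 1)) = 1 :: cfe r := by
  have hlt : 1 / (r + 1) < 1 := by rw [div_lt_one (by linarith)]; linarith
  have hfloor : ⌊r⌋ = 0 := Int.floor_eq_zero_iff.2 ⟨h0.le, h1⟩
  rw [cfe_eq_cons (by positivity) hlt, one_div, inv_inv, Int.floor_add_one, Int.fract_add_one,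
    hfloor, Int.fract_eq_self.2 ⟨h0.le, h1⟩]
  rfl

theorem cfe_div_add_one {r : ℚ} (h0 : 0 < r) (h1 : r < 1) :
    cfe (r / (r + 1)) = (cfe r).modifyHead (· + 1) := by
  have hlt : r / (r + 1) < 1 := by rw [div_lt_one (by linarith)]; linarith
  have hinv : (r / (r + 1))⁻¹ = r⁻¹ + 1 := by field_simp; ring
  have hfloor : 0 ≤ ⌊r⁻¹⌋ := Int.floor_nonneg.2 (by positivity)
  rw [cfe_eq_cons (by positivity) hlt, cfe_eq_cons h0 h1, hinv, Int.floor_add_one,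
    Int.fract_add_one, List.modifyHead_cons, Int.toNat_add hfloor (by norm_num)]
  rfl

theorem keplerStep_mem_Ioo {r : ℚ} (hr : 0 < r) (b : Bool) : keplerStep r b ∈ Set.Ioo 0 1 := by
  cases b <;> simp only [keplerStep, if_true, if_false, Bool.false_eq_true] <;>
    exact ⟨by positivity, by rw [div_lt_one (by linarith)]; linarith⟩

theorem keplerSeq_mem_Ioo (n : ℕ) : keplerSeq n ∈ Set.Ioo 0 1 := by
  induction n using Nat.strong_induction_on with
  | _ n ih =>
    rw [keplerSeq]
    split_ifs with h
    · norm_num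
    · exact keplerStep_mem_Ioo (ih (n / 2) (by omega)).1 _

/-- The children of a node of the infinite binary tree whose nodes are numbered by the positive
integers in heap order, as in `keplerSeq`: `2 * n` (for `false`) and `2 * n + 1` (for `true`). -/
def heapChild (b : Bool) (n : ℕ+) : ℕ+ :=
  ⟨Nat.bit b n, Nat.pos_of_ne_zero (Nat.bit_ne_zero b n.ne_zero)⟩

theorem keplerSeq_heapChild (b : Bool) (n : ℕ+) :
    keplerSeq (heapChild b n) = keplerStep (keplerSeq n) b := by
  have hbit : ¬ Nat.bit b n ≤ 1 := by have := n.pos; rw [Nat.bit_val]; omega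
  rw [heapChild, PNat.mk_coe, keplerSeq, if_neg hbit, Nat.bit_div_two, Nat.bit_mod_two]
  cases b <;> rfl

/-- The continued fraction digits of the `n`-th rational of the Kepler tree. -/
def keplerDigits (n : ℕ+) : List ℕ := cfe (keplerSeq n)

theorem keplerDigits_one : keplerDigits 1 = [2] := by
  rw [keplerDigits, keplerSeq, if_pos (by simp), cfe_one_half]

theorem keplerDigits_heapChild_false (n : ℕ+) :
    keplerDigits (heapChild false n) = (keplerDigits n).modifyHead (· + 1) := by
  have h := keplerSeq_mem_Ioo n
  rw [keplerDigits, keplerSeq_heapChild, keplerDigits, ← cfe_div_add_one h.1 h.2]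
  rfl

theorem keplerDigits_heapChild_true (n : ℕ+) :
    keplerDigits (heapChild true n) = 1 :: keplerDigits n := by
  have h := keplerSeq_mem_Ioo n
  rw [keplerDigits, keplerSeq_heapChild, keplerDigits, ← cfe_one_div_add_one h.1 h.2]
  rfl

theorem exists_keplerDigits_eq_cons (n : ℕ+) : ∃ a t, keplerDigits n = (a + 1) :: t := by
  have h := keplerSeq_mem_Ioo n
  have hfloor : 1 ≤ ⌊(keplerSeq n)⁻¹⌋ :=
    Int.le_floor.2 (by exact_mod_cast (one_le_inv₀ h.1).2 h.2.le)
  refine ⟨⌊(keplerSeq n)⁻¹⌋.toNat - 1, cfe (Int.fract (keplerSeq n)⁻¹), ?_⟩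
  rw [keplerDigits, cfe_eq_cons h.1 h.2, Nat.sub_add_cancel (by omega)]

theorem childMean_heapChild_apply (f : ℕ+ → ℝ) (n : ℕ+) :
    childMean heapChild f n = (f (heapChild true n) + f (heapChild false n)) / 2 := by
  rw [childMean_apply, Fintype.expect_eq_sum_div_card, Fintype.sum_bool, Fintype.card_bool,
    Nat.cast_ofNat]

theorem sum_range_two_mul {M : Type*} [AddCommMonoid M] (f : ℕ → M) (n : ℕ) :
    ∑ i ∈ range (2 * n), f i = ∑ i ∈ range n, (f (2 * i) + f (2 * i + 1)) := by
  induction n with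
  | zero => simp
  | succ n ih =>
    rw [mul_add, sum_range_succ _ n, ← ih, mul_one, sum_range_succ, sum_range_succ, add_assoc]

theorem sum_range_two_pow_eq_childMean_pow (f : ℕ → ℝ) (l : ℕ) :
    ∑ j ∈ range (2 ^ l), f (2 ^ l + j) =
      2 ^ l * (childMean heapChild ^ l) (fun n => f n) 1 := by
  induction l generalizing f with
  | zero => simp
  | succ l ih =>
    have siblings : childMean heapChild (fun n => f n) =
        (2 : ℝ)⁻¹ • fun n : ℕ+ => f (2 * n) + f (2 * n + 1) := by
      ext n
      simp only [childMean_heapChild_apply, heapChild, PNat.mk_coe, Nat.bit_true_apply,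
        Nat.bit_false_apply, Pi.smul_apply, smul_eq_mul]
      ring
    calc ∑ j ∈ range (2 ^ (l + 1)), f (2 ^ (l + 1) + j)
      _ = ∑ j ∈ range (2 ^ l), (f (2 * (2 ^ l + j)) + f (2 * (2 ^ l + j) + 1)) := by
        simp only [pow_succ', sum_range_two_mul, mul_add, add_assoc]
      _ = 2 ^ (l + 1) * (childMean heapChild ^ (l + 1)) (fun n => f n) 1 := by
        rw [ih fun n => f (2 * n) + f (2 * n + 1), pow_succ (childMean heapChild),
          Module.End.mul_apply, siblings, map_smul, Pi.smul_apply, smul_eq_mul]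
        ring

theorem childMean_pow_length_keplerDigits (l : ℕ) :
    (childMean heapChild ^ l) (fun n => ((keplerDigits n).length : ℝ)) 1 = 1 + l / 2 := by
  have drift : childMean heapChild (fun n => ((keplerDigits n).length : ℝ)) =
      (fun n => ((keplerDigits n).length : ℝ)) + fun _ => 1 / 2 := by
    ext n
    simp only [childMean_heapChild_apply, keplerDigits_heapChild_true, keplerDigits_heapChild_false,
      List.length_cons, List.length_modifyHead, Pi.add_apply, Nat.cast_succ]
    ring
  induction l with
  | zero => simp [keplerDigits_one]
  | succ l ih =>
    rw [pow_succ, Module.End.mul_apply, drift, map_add, Pi.add_apply, ih, childMean_pow_const,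
      Nat.cast_succ]
    ring

theorem length_cfe_keplerStep_le {r : ℚ} (h0 : 0 < r) (h1 : r < 1) (b : Bool) :
    (cfe (keplerStep r b)).length ≤ (cfe r).length + 1 := by
  cases b
  · exact (congrArg List.length (cfe_div_add_one h0 h1)).trans_le (by simp)
  · exact (congrArg List.length (cfe_one_div_add_one h0 h1)).le

theorem length_cfe_keplerSeq_le (n : ℕ) : (cfe (keplerSeq n)).length ≤ Nat.log 2 n + 1 := by
  induction n using Nat.strong_induction_on with
  | _ n ih =>
    rw [keplerSeq]
    split_ifs with h
    · rw [cfe_one_half]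
      simp
    · have hr := keplerSeq_mem_Ioo (n / 2)
      have hlog : 0 < Nat.log 2 n := Nat.log_pos one_lt_two (by omega)
      have hhalf := ih (n / 2) (by omega)
      rw [Nat.log_div_base] at hhalf
      have := length_cfe_keplerStep_le hr.1 hr.2 (decide (n % 2 = 1))
      omega

theorem childMean_prefixIndicator_one_cons (d : List ℕ) :
    childMean heapChild (fun n => prefixIndicator (1 :: d) (keplerDigits n)) =
      (2 : ℝ)⁻¹ • fun n => prefixIndicator d (keplerDigits n) := by
  ext n
  obtain ⟨a, t, h⟩ := exists_keplerDigits_eq_cons n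
  simp [childMean_heapChild_apply, keplerDigits_heapChild_true, keplerDigits_heapChild_false,
    prefixIndicator, h, List.cons_prefix_cons, div_eq_inv_mul]

theorem childMean_prefixIndicator_succ_cons {x : ℕ} (hx : 0 < x) (d : List ℕ) :
    childMean heapChild (fun n => prefixIndicator ((x + 1) :: d) (keplerDigits n)) =
      (2 : ℝ)⁻¹ • fun n => prefixIndicator (x :: d) (keplerDigits n) := by
  ext n
  obtain ⟨a, t, h⟩ := exists_keplerDigits_eq_cons n
  simp [childMean_heapChild_apply, keplerDigits_heapChild_true, keplerDigits_heapChild_false,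
    prefixIndicator, h, List.cons_prefix_cons, div_eq_inv_mul, hx.ne']

theorem childMean_pow_prefixIndicator_cons {x : ℕ} (hx : 0 < x) (d : List ℕ) :
    (childMean heapChild ^ x) (fun n => prefixIndicator (x :: d) (keplerDigits n)) =
      ((2 : ℝ) ^ x)⁻¹ • fun n => prefixIndicator d (keplerDigits n) := by
  induction x, hx using Nat.le_induction with
  | base => simpa using childMean_prefixIndicator_one_cons d
  | succ x hx ih =>
    rw [pow_succ, Module.End.mul_apply, childMean_prefixIndicator_succ_cons hx, map_smul, ih,
      smul_smul, pow_succ', mul_inv]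

theorem childMean_pow_sum_prefixIndicator {d : List ℕ} (hd : ∀ x ∈ d, 0 < x) :
    (childMean heapChild ^ d.sum) (fun n => prefixIndicator d (keplerDigits n)) =
      fun _ => ((2 : ℝ) ^ d.sum)⁻¹ := by
  induction d with
  | nil => simp [prefixIndicator]
  | cons x d ih =>
    rw [List.sum_cons, add_comm, pow_add, Module.End.mul_apply,
      childMean_pow_prefixIndicator_cons (hd x (by simp)), map_smul,
      ih fun y hy => hd y (by simp [hy])]
    ext
    simp [pow_add]

theorem discrepancy_heapChild_true (d : List ℕ) (c : ℝ) (n : ℕ+) :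
    discrepancy d c (keplerDigits (heapChild true n)) = discrepancy d c (keplerDigits n) +
      prefixIndicator d (keplerDigits (heapChild true n)) - c := by
  rw [keplerDigits_heapChild_true, discrepancy_cons]

theorem discrepancy_heapChild_false (d : List ℕ) (c : ℝ) (n : ℕ+) :
    discrepancy d c (keplerDigits (heapChild false n)) = discrepancy d c (keplerDigits n) +
      prefixIndicator d (keplerDigits (heapChild false n)) -
        prefixIndicator d (keplerDigits n) := by
  obtain ⟨a, t, h⟩ := exists_keplerDigits_eq_cons n
  rw [keplerDigits_heapChild_false, h, List.modifyHead_cons, discrepancy_cons, discrepancy_cons]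
  ring

theorem abs_discrepancy_heapChild_sub_le {c : ℝ} (hc : c ∈ Set.Icc 0 1) (d : List ℕ) (b : Bool)
    (n : ℕ+) :
    |discrepancy d c (keplerDigits (heapChild b n)) - discrepancy d c (keplerDigits n)| ≤ 1 := by
  have hparent := prefixIndicator_mem_Icc d (keplerDigits n)
  have hchild := prefixIndicator_mem_Icc d (keplerDigits (heapChild b n))
  cases b
  · rw [discrepancy_heapChild_false, abs_le]
    constructor <;> linarith [hparent.1, hparent.2, hchild.1, hchild.2]
  · rw [discrepancy_heapChild_true, abs_le]
    constructor <;> linarith [hc.1, hc.2, hchild.1, hchild.2]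

theorem childMean_discrepancy (d : List ℕ) (c : ℝ) :
    childMean heapChild (fun n => discrepancy d c (keplerDigits n)) =
      (fun n => discrepancy d c (keplerDigits n)) +
        childMean heapChild (fun n => prefixIndicator d (keplerDigits n)) -
        (2 : ℝ)⁻¹ • ((fun n => prefixIndicator d (keplerDigits n)) + fun _ => c) := by
  ext n
  simp only [childMean_heapChild_apply, discrepancy_heapChild_true, discrepancy_heapChild_false,
    Pi.sub_apply, Pi.add_apply, Pi.smul_apply, smul_eq_mul]
  ring

theorem childMean_childMean_pow_discrepancy {d : List ℕ} (hd : ∀ x ∈ d, 0 < x) :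
    childMean heapChild ((childMean heapChild ^ d.sum)
        fun n => discrepancy d (2 ^ d.sum)⁻¹ (keplerDigits n)) =
      (childMean heapChild ^ d.sum) fun n => discrepancy d (2 ^ d.sum)⁻¹ (keplerDigits n) := by
  have commute (f : ℕ+ → ℝ) : childMean heapChild ((childMean heapChild ^ d.sum) f) =
      (childMean heapChild ^ d.sum) (childMean heapChild f) := by
    rw [← Module.End.mul_apply, ← Module.End.mul_apply, ← pow_succ, pow_succ']
  rw [commute, childMean_discrepancy, map_sub, map_add, map_smul, map_add, ← commute,
    childMean_pow_sum_prefixIndicator hd, childMean_const, childMean_pow_const]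
  ext n
  simp only [Pi.sub_apply, Pi.add_apply, Pi.smul_apply, smul_eq_mul]
  ring

theorem inv_two_pow_mem_Icc (k : ℕ) : ((2 : ℝ) ^ k)⁻¹ ∈ Set.Icc 0 1 :=
  ⟨by positivity, inv_le_one_of_one_le₀ (one_le_pow₀ one_le_two)⟩

theorem isLittleO_childMean_pow_abs_discrepancy {d : List ℕ} (hd : ∀ x ∈ d, 0 < x) :
    (fun l : ℕ => (childMean heapChild ^ l)
      |fun n => discrepancy d (2 ^ d.sum)⁻¹ (keplerDigits n)| 1) =o[atTop] fun l => (l : ℝ) :=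
  isLittleO_childMean_pow_abs
    (abs_discrepancy_heapChild_sub_le (inv_two_pow_mem_Icc d.sum) d)
    (childMean_childMean_pow_discrepancy hd) 1

section PermutedLevels

variable (π : (l : ℕ) → Equiv.Perm (Fin (2 ^ l)))

/-- The continued fraction expansions of the rationals of level `l` of the Kepler tree, in the order
prescribed by `π l`; `permLevel π l` is their concatenation. -/
def permWords (l : ℕ) : List (List ℕ) :=
  List.ofFn fun j : Fin (2 ^ l) => cfe (keplerSeq (2 ^ l + (π l j : ℕ)))

theorem flatMap_permLevel_eq_flatten (L : ℕ) :
    (List.range L).flatMap (permLevel π) = ((List.range L).flatMap (permWords π)).flatten := by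
  rw [← List.flatMap_id, List.flatMap_assoc]
  simp only [List.flatMap_id]
  rfl

theorem sum_map_permWords (φ : List ℕ → ℝ) (l : ℕ) :
    ((permWords π l).map φ).sum =
      2 ^ l * (childMean heapChild ^ l) (fun n => φ (keplerDigits n)) 1 := by
  rw [permWords, List.map_ofFn, List.sum_ofFn]
  exact (Equiv.sum_comp (π l) fun j : Fin (2 ^ l) => φ (cfe (keplerSeq (2 ^ l + j)))).trans
    ((Finset.sum_range fun j => φ (cfe (keplerSeq (2 ^ l + j)))).symm.trans
      (sum_range_two_pow_eq_childMean_pow (fun n => φ (cfe (keplerSeq n))) l))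

theorem length_permLevel (l : ℕ) : ((permLevel π l).length : ℝ) = 2 ^ l * (1 + l / 2) := by
  rw [← childMean_pow_length_keplerDigits, ← sum_map_permWords π fun w => (w.length : ℝ)]
  change ((permWords π l).flatten.length : ℝ) = _
  rw [List.length_flatten, Nat.cast_list_sum, List.map_map]
  rfl

theorem permLevel_ne_nil (l : ℕ) : permLevel π l ≠ [] := by
  intro h
  have := length_permLevel π l
  rw [h, List.length_nil, Nat.cast_zero] at this
  have : (0 : ℝ) < 2 ^ l * (1 + l / 2) := by positivity
  linarith

theorem length_flatMap_range_permLevel (L : ℕ) :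
    (((List.range L).flatMap (permLevel π)).length : ℝ) = L * 2 ^ L / 2 := by
  induction L with
  | zero => simp
  | succ L ih =>
    rw [List.range_succ, List.flatMap_append, List.length_append, List.flatMap_singleton,
      Nat.cast_add, ih, length_permLevel]
    push_cast
    ring

theorem length_le_of_mem_flatMap_range_permWords {L : ℕ} {w : List ℕ}
    (hw : w ∈ (List.range L).flatMap (permWords π)) : w.length ≤ L := by
  obtain ⟨l, hl, hw⟩ := List.mem_flatMap.1 hw
  obtain ⟨j, rfl⟩ := List.mem_ofFn.1 hw
  have hlog : Nat.log 2 (2 ^ l + (π l j : ℕ)) < l + 1 :=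
    Nat.log_lt_of_lt_pow (by positivity) (by have := (π l j).isLt; rw [pow_succ]; omega)
  have := length_cfe_keplerSeq_le (2 ^ l + (π l j : ℕ))
  have := List.mem_range.1 hl
  omega

theorem abs_discrepancy_permDigits_le {c : ℝ} (hc : c ∈ Set.Icc 0 1) (d : List ℕ) {n L : ℕ}
    (hn : n ≤ ((List.range L).flatMap (permLevel π)).length) :
    |discrepancy d c ((List.range n).map (permDigits π))| ≤
      ∑ l ∈ range L, ((permWords π l).map fun u => |discrepancy d c u| + d.length).sum + L := by
  rw [← sum_map_flatMap_range]
  refine abs_discrepancy_le_of_prefix_flatten hc d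
    (fun _ => length_le_of_mem_flatMap_range_permWords π) ?_
  rw [← flatMap_permLevel_eq_flatten]
  exact map_getD_flatMap_range_prefix (permLevel_ne_nil π) 0 hn

theorem isLittleO_sum_permWords_discrepancy {d : List ℕ} (hd : ∀ x ∈ d, 0 < x) :
    (fun l => ((permWords π l).map fun u => |discrepancy d (2 ^ d.sum)⁻¹ u| + d.length).sum)
      =o[atTop] fun l => ((permLevel π l).length : ℝ) := by
  have const : (fun _ : ℕ => (d.length : ℝ)) =o[atTop] fun l : ℕ => (l : ℝ) :=
    isLittleO_const_left.2 (.inr (tendsto_norm_atTop_atTop.comp tendsto_natCast_atTop_atTop))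
  have length_ge : (fun l : ℕ => (l : ℝ)) =O[atTop] fun l : ℕ => 1 + (l : ℝ) / 2 :=
    IsBigO.of_bound 2 (.of_forall fun l => by
      rw [Real.norm_natCast, Real.norm_of_nonneg (by positivity)]; linarith)
  have mean := ((isLittleO_childMean_pow_abs_discrepancy hd).add const).trans_isBigO length_ge
  refine ((isBigO_refl (fun l : ℕ => (2 : ℝ) ^ l) atTop).mul_isLittleO mean).congr (fun l => ?_)
    fun l => (length_permLevel π l).symm
  rw [sum_map_permWords]
  congr 1
  have split : (fun n => |discrepancy d (2 ^ d.sum)⁻¹ (keplerDigits n)| + d.length) =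
      |fun n => discrepancy d (2 ^ d.sum)⁻¹ (keplerDigits n)| + fun _ => (d.length : ℝ) := rfl
  rw [split, map_add, childMean_pow_const, Pi.add_apply]

theorem tendsto_length_flatMap_range_permLevel :
    Tendsto (fun L => ((List.range L).flatMap (permLevel π)).length) atTop atTop :=
  tendsto_atTop_mono (le_length_flatMap_range (permLevel_ne_nil π)) tendsto_id

theorem sum_length_permLevel (L : ℕ) :
    ∑ l ∈ range L, ((permLevel π l).length : ℝ) =
      ((List.range L).flatMap (permLevel π)).length := by
  rw [List.length_flatMap, ← Nat.cast_sum]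
  rfl

theorem isBigO_length_flatMap_range_succ_permLevel :
    (fun L => (((List.range (L + 1)).flatMap (permLevel π)).length : ℝ)) =O[atTop]
      fun L => (((List.range L).flatMap (permLevel π)).length : ℝ) := by
  refine IsBigO.of_bound 4 ?_
  filter_upwards [eventually_ge_atTop 1] with L hL
  have hL' : (1 : ℝ) ≤ L := by exact_mod_cast hL
  have hpow : (0 : ℝ) < 2 ^ L := by positivity
  rw [Real.norm_natCast, Real.norm_natCast, length_flatMap_range_permLevel,
    length_flatMap_range_permLevel, pow_succ]
  push_cast
  nlinarith

theorem natCast_succ_isLittleO_length_flatMap_range_permLevel :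
    (fun L : ℕ => ((L + 1 : ℕ) : ℝ)) =o[atTop]
      fun L => (((List.range L).flatMap (permLevel π)).length : ℝ) := by
  have linear : (fun L : ℕ => ((L + 1 : ℕ) : ℝ)) =O[atTop] fun L : ℕ => (L : ℝ) := by
    refine IsBigO.of_bound 2 ?_
    filter_upwards [eventually_ge_atTop 1] with L hL
    rw [Real.norm_natCast, Real.norm_natCast]
    exact_mod_cast (by omega : L + 1 ≤ 2 * L)
  have exponential : (fun _ : ℕ => (1 : ℝ)) =o[atTop] fun L : ℕ => (2 : ℝ) ^ L / 2 :=
    isLittleO_const_left.2 <| .inr <| tendsto_norm_atTop_atTop.comp <|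
      (tendsto_pow_atTop_atTop_of_one_lt one_lt_two).atTop_div_const two_pos
  refine (linear.mul_isLittleO exponential).congr (fun L => mul_one _) fun L => ?_
  rw [length_flatMap_range_permLevel, mul_div_assoc]

theorem isLittleO_discrepancy_permDigits {d : List ℕ} (hd : ∀ x ∈ d, 0 < x) :
    (fun n => discrepancy d (2 ^ d.sum)⁻¹ ((List.range n).map (permDigits π))) =o[atTop]
      fun n => (n : ℝ) := by
  have hN := tendsto_length_flatMap_range_permLevel π
  refine isLittleO_natCast_of_forall_le hN
    (fun L n hn => abs_discrepancy_permDigits_le π (inv_two_pow_mem_Icc d.sum) d hn) ?_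
  have cost := (isLittleO_sum_permWords_discrepancy π hd).sum_range (fun l => Nat.cast_nonneg _)
    (by simp only [sum_length_permLevel]; exact tendsto_natCast_atTop_atTop.comp hN)
  simp only [sum_length_permLevel] at cost
  exact ((cost.comp_tendsto (tendsto_add_atTop_nat 1)).trans_isBigO
    (isBigO_length_flatMap_range_succ_permLevel π)).add
      (natCast_succ_isLittleO_length_flatMap_range_permLevel π)

end PermutedLevels

/-- **Level-permuted Kepler concatenations are Minkowski normal**: for any choice of
permutations `π l` of `{1, …, 2^l}`, the sequence `𝒦^π` is Minkowski normal: every block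
`d = (d₁, …, d_k)` of positive integers occurs in `𝒦^π` with asymptotic frequency
`2^{-(d₁ + ⋯ + d_k)}`. -/
theorem permDigits_minkowskiNormal (π : (l : ℕ) → Equiv.Perm (Fin (2 ^ l))) :
    MinkowskiNormalSeq (permDigits π) := by
  intro d hne hpos
  exact (tendsto_occCount_div_iff _ hne _).2 (isLittleO_discrepancy_permDigits π hpos)
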